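/- Second fundamental theorem of FC for the 1st level general fractional derivative: let (κ, k₁, k₂) ∈ L₁¹ and f ∈ C¹_{-1,(k₂)}(0,∞). Then for all t > 0, (κ * ( 1L D_{(k₁,k₂)} f))(t) = f(t) − (k₂ * f)(0) · (k₁ * κ)(t), where (k₂ * f)(0) = lim_{s→0+} (k₂ * f)(s). -/

import Mathlib

open Real Filter MeasureTheory intervalIntegral

/-- The Laplace convolution `(f * g)(t) = ∫_0^t f(t-τ) g(τ) dτ`. -/
noncomputable def lconv (f g : ℝ → ℝ) : ℝ → ℝ :=
  fun t => ∫ τ in (0:ℝ)..t, f (t - τ) * g τ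

/-- The space `C_{-1}(0,∞)`: functions representable as `t^p f₁(t)` with `p > -1`
and `f₁` continuous on `[0,∞)`. -/
def CMinusOne (f : ℝ → ℝ) : Prop :=
  ∃ p : ℝ, p > -1 ∧ ∃ f₁ : ℝ → ℝ, ContinuousOn f₁ (Set.Ici 0) ∧
    ∀ t > (0:ℝ), f t = t ^ p * f₁ t


/-- The class `L₁¹` of triples of 1st level kernels: `κ, k₁, k₂ ∈ C_{-1}(0,∞)` with
`(κ * k₁ * k₂)(t) = 1` for all `t > 0`. -/
def FirstLevelKernels (κ k₁ k₂ : ℝ → ℝ) : Prop :=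
  CMinusOne κ ∧ CMinusOne k₁ ∧ CMinusOne k₂ ∧ ∀ t > (0:ℝ), lconv κ (lconv k₁ k₂) t = 1


lemma cm_rep {f : ℝ → ℝ} (hf : CMinusOne f) : ∃ p : ℝ, -1 < p ∧ ∃ f₁ : ℝ → ℝ,
    Continuous f₁ ∧ ∀ t > (0:ℝ), f t = t ^ p * f₁ t := by
  obtain ⟨p, hp, f₁, hc, h⟩ := hf
  refine ⟨p, hp, fun t => f₁ (max 0 t), ?_, ?_⟩
  · exact hc.comp_continuous (by fun_prop) (fun x => by simp)
  · intro t ht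
    simp only [h t ht, max_eq_right (le_of_lt ht)]

lemma cm_continuousOn {f : ℝ → ℝ} (hf : CMinusOne f) : ContinuousOn f (Set.Ioi 0) := by
  obtain ⟨p, hp, f₁, hc, h⟩ := cm_rep hf
  have : ContinuousOn (fun t : ℝ => t ^ p * f₁ t) (Set.Ioi 0) := by
    refine ContinuousOn.mul ?_ hc.continuousOn
    intro x hx
    exact (Real.continuousAt_rpow_const x p (Or.inl (ne_of_gt hx))).continuousWithinAt
  exact this.congr (fun t ht => h t ht)

lemma cm_abs {f : ℝ → ℝ} (hf : CMinusOne f) : CMinusOne (fun t => |f t|) := by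
  obtain ⟨p, hp, f₁, hc, h⟩ := hf
  refine ⟨p, hp, fun t => |f₁ t|, hc.abs, ?_⟩
  intro t ht
  simp only [h t ht, abs_mul, abs_of_nonneg (Real.rpow_nonneg ht.le p)]

lemma cm_one : CMinusOne (fun _ => (1:ℝ)) :=
  ⟨0, by norm_num, fun _ => 1, continuousOn_const, fun t _ => by simp⟩

lemma w_integrable {p q : ℝ} (hp : -1 < p) (hq : -1 < q) :
    IntervalIntegrable (fun u : ℝ => (1 - u) ^ p * u ^ q) volume 0 1 := by
  have h := (Complex.betaIntegral_convergent (u := ((q + 1 : ℝ) : ℂ)) (v := ((p + 1 : ℝ) : ℂ))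
    (by simp only [Complex.ofReal_re]; linarith) (by simp only [Complex.ofReal_re]; linarith)).norm
  rw [intervalIntegrable_iff_integrableOn_Ioo_of_le zero_le_one] at h ⊢
  refine h.congr_fun ?_ measurableSet_Ioo
  intro u hu
  have h1 : 0 < 1 - u := by linarith [hu.2]
  have e1 : (1 - (u:ℂ)) = ((1 - u : ℝ) : ℂ) := by push_cast; ring
  simp only [norm_mul]
  rw [e1, Complex.norm_cpow_eq_rpow_re_of_pos hu.1, Complex.norm_cpow_eq_rpow_re_of_pos h1]
  simp
  ring

lemma scaled {f g f₁ g₁ : ℝ → ℝ} {p q : ℝ} (hf : ∀ t > (0:ℝ), f t = t ^ p * f₁ t)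
    (hg : ∀ t > (0:ℝ), g t = t ^ q * g₁ t) {t : ℝ} (ht : 0 < t) :
    ∀ u ∈ Set.Ioo (0:ℝ) 1, f (t - t * u) * g (t * u) =
      t ^ (p + q) * (((1 - u) ^ p * u ^ q) * (f₁ (t * (1 - u)) * g₁ (t * u))) := by
  intro u hu
  have h1 : 0 < 1 - u := by linarith [hu.2]
  have e : t - t * u = t * (1 - u) := by ring
  rw [e, hf _ (mul_pos ht h1), hg _ (mul_pos ht hu.1), Real.mul_rpow ht.le h1.le,
    Real.mul_rpow ht.le hu.1.le, Real.rpow_add ht]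
  ring

lemma conv_int {f g : ℝ → ℝ} (hf : CMinusOne f) (hg : CMinusOne g) {t : ℝ} (ht : 0 < t) :
    IntervalIntegrable (fun τ => f (t - τ) * g τ) volume 0 t := by
  obtain ⟨p, hp, f₁, hfc, hf⟩ := cm_rep hf
  obtain ⟨q, hq, g₁, hgc, hg⟩ := cm_rep hg
  have h := IntervalIntegrable.comp_mul_left_iff (f := fun τ => f (t - τ) * g τ) (a := 0) (b := t)
    ht.ne'
  rw [← h, zero_div, div_self ht.ne']
  have h2 : IntervalIntegrable (fun u => t ^ (p + q) * (((1 - u) ^ p * u ^ q) *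
      (f₁ (t * (1 - u)) * g₁ (t * u)))) volume 0 1 :=
    ((w_integrable hp hq).mul_continuousOn (by fun_prop)).const_mul _
  rw [intervalIntegrable_iff_integrableOn_Ioo_of_le zero_le_one] at h2 ⊢
  exact h2.congr_fun (fun u hu => (scaled hf hg ht u hu).symm) measurableSet_Ioo

lemma cm_int {f : ℝ → ℝ} (hf : CMinusOne f) {t : ℝ} (ht : 0 < t) :
    IntervalIntegrable f volume 0 t := by
  simpa using conv_int cm_one hf ht

lemma cm_lconv {f g : ℝ → ℝ} (hf : CMinusOne f) (hg : CMinusOne g) : CMinusOne (lconv f g) := by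
  obtain ⟨p, hp, f₁, hfc, hf⟩ := cm_rep hf
  obtain ⟨q, hq, g₁, hgc, hg⟩ := cm_rep hg
  refine ⟨p + q + 1, by linarith, fun t => ∫ u in (0:ℝ)..1, ((1 - u) ^ p * u ^ q) *
      (f₁ (t * (1 - u)) * g₁ (t * u)), ?_, ?_⟩
  · refine Continuous.continuousOn (continuous_iff_continuousAt.2 fun x₀ => ?_)
    have hG : Continuous (fun z : ℝ × ℝ => f₁ (z.1 * (1 - z.2)) * g₁ (z.1 * z.2)) := by fun_prop
    obtain ⟨M, hM⟩ := ((isCompact_Icc (a := x₀ - 1) (b := x₀ + 1)).prod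
      (isCompact_Icc (a := (0:ℝ)) (b := 1))).exists_bound_of_continuousOn hG.continuousOn
    refine continuousAt_of_dominated_interval
      (bound := fun u => ‖(1 - u) ^ p * u ^ q‖ * M) ?_ ?_ ?_ ?_
    · refine Eventually.of_forall fun x => ?_
      have : IntervalIntegrable (fun u => ((1 - u) ^ p * u ^ q) *
        (f₁ (x * (1 - u)) * g₁ (x * u))) volume 0 1 :=
        (w_integrable hp hq).mul_continuousOn (by fun_prop)
      exact this.def'.aestronglyMeasurable
    · have : Set.Icc (x₀ - 1) (x₀ + 1) ∈ nhds x₀ := Icc_mem_nhds (by linarith) (by linarith)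
      filter_upwards [this] with x hx
      refine Eventually.of_forall fun u hu => ?_
      rw [Set.uIoc_of_le zero_le_one] at hu
      rw [norm_mul]
      exact mul_le_mul_of_nonneg_left (hM (x, u) ⟨hx, hu.1.le, hu.2⟩) (norm_nonneg _)
    · exact (w_integrable hp hq).norm.mul_const M
    · refine Eventually.of_forall fun u hu => ?_
      exact Continuous.continuousAt (by fun_prop)
  · intro t ht
    have h := intervalIntegral.smul_integral_comp_mul_left (a := 0) (b := 1)
      (fun τ => f (t - τ) * g τ) t
    rw [mul_zero, mul_one] at h
    unfold lconv
    rw [← h, intervalIntegral.integral_of_le zero_le_one, integral_Ioc_eq_integral_Ioo,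
      setIntegral_congr_fun measurableSet_Ioo (scaled hf hg ht), MeasureTheory.integral_const_mul,
      ← integral_Ioc_eq_integral_Ioo, ← intervalIntegral.integral_of_le zero_le_one,
      Real.rpow_add ht (p+q) 1, Real.rpow_one, smul_eq_mul]
    ring

/-- extension by zero -/
noncomputable def ez (f : ℝ → ℝ) : ℝ → ℝ := Set.indicator (Set.Ioi 0) f

lemma ez_meas {f : ℝ → ℝ} (hf : CMinusOne f) : AEStronglyMeasurable (ez f) volume :=
  (aestronglyMeasurable_indicator_iff measurableSet_Ioi).2
    ((cm_continuousOn hf).aestronglyMeasurable measurableSet_Ioi)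

lemma ez_norm (f : ℝ → ℝ) : (fun x => ‖ez f x‖) = ez (fun t => |f t|) := by
  funext x
  unfold ez
  by_cases hx : x ∈ Set.Ioi (0:ℝ) <;> simp [hx, Set.indicator]

lemma ez_prod (f g : ℝ → ℝ) (x : ℝ) :
    (fun t => ContinuousLinearMap.mul ℝ ℝ (ez g t) (ez f (x - t))) =
      Set.indicator (Set.Ioo 0 x) (fun τ => f (x - τ) * g τ) := by
  funext t
  simp only [ez, Set.indicator, Set.mem_Ioi, Set.mem_Ioo, sub_pos, ContinuousLinearMap.mul_apply']
  by_cases h1 : 0 < t <;> by_cases h2 : t < x <;> simp [h1, h2, mul_comm]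

lemma ez_exists {f g : ℝ → ℝ} (hf : CMinusOne f) (hg : CMinusOne g) (x : ℝ) :
    ConvolutionExistsAt (ez g) (ez f) x (ContinuousLinearMap.mul ℝ ℝ) volume := by
  unfold ConvolutionExistsAt
  rw [ez_prod, integrable_indicator_iff measurableSet_Ioo]
  rcases lt_or_ge 0 x with hx | hx
  · exact (intervalIntegrable_iff_integrableOn_Ioo_of_le hx.le).1 (conv_int hf hg hx)
  · simp [Set.Ioo_eq_empty (not_lt.2 hx)]

lemma ez_conv (f g : ℝ → ℝ) :
    convolution (ez g) (ez f) (ContinuousLinearMap.mul ℝ ℝ) volume = ez (lconv f g) := by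
  funext x
  unfold convolution
  rw [ez_prod, MeasureTheory.integral_indicator measurableSet_Ioo]
  rcases lt_or_ge 0 x with hx | hx
  · rw [← integral_Ioc_eq_integral_Ioo, ← intervalIntegral.integral_of_le hx.le]
    simp [ez, hx, lconv]
  · simp [ez, Set.Ioo_eq_empty (not_lt.2 hx), hx]

lemma lconv_assoc {f g h : ℝ → ℝ} (hf : CMinusOne f) (hg : CMinusOne g) (hh : CMinusOne h)
    {t : ℝ} (ht : 0 < t) : lconv (lconv f g) h t = lconv f (lconv g h) t := by
  have key := convolution_assoc (ContinuousLinearMap.mul ℝ ℝ) (ContinuousLinearMap.mul ℝ ℝ)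
    (ContinuousLinearMap.mul ℝ ℝ) (ContinuousLinearMap.mul ℝ ℝ) (μ := volume) (ν := volume)
    (f := ez h) (g := ez g) (k := ez f) (x₀ := t)
    (by intro x y z; simp [mul_assoc]) (ez_meas hh) (ez_meas hg) (ez_meas hf)
    (Eventually.of_forall fun y => ez_exists hg hh y)
    (Eventually.of_forall fun y => by
      rw [ez_norm, ez_norm]; exact ez_exists (cm_abs hf) (cm_abs hg) y)
    (by
      rw [ez_norm, ez_norm, ez_norm, ez_conv]
      exact ez_exists (cm_lconv (cm_abs hf) (cm_abs hg)) (cm_abs hh) t)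
  rw [ez_conv, ez_conv, ez_conv, ez_conv] at key
  simpa [ez, ht] using key.symm

lemma lconv_comm (f g : ℝ → ℝ) (t : ℝ) : lconv f g t = lconv g f t := by
  unfold lconv
  have := intervalIntegral.integral_comp_sub_left (a := 0) (b := t)
    (fun τ => f (t - τ) * g τ) t
  simp only [sub_self, sub_zero, sub_sub_cancel] at this
  rw [← this]
  exact intervalIntegral.integral_congr fun x _ => mul_comm _ _

lemma lconv_congr (a : ℝ → ℝ) {f g : ℝ → ℝ} (h : ∀ t > (0:ℝ), f t = g t) {t : ℝ} (ht : 0 < t) :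
    lconv a f t = lconv a g t := by
  unfold lconv
  rw [intervalIntegral.integral_of_le ht.le, intervalIntegral.integral_of_le ht.le]
  exact setIntegral_congr_fun measurableSet_Ioc fun u hu => by simp only [h u hu.1]

lemma lconv_lin {a f g : ℝ → ℝ} (c : ℝ) (ha : CMinusOne a) (hf : CMinusOne f) (hg : CMinusOne g)
    {t : ℝ} (ht : 0 < t) :
    lconv a (fun s => c * f s + g s) t = c * lconv a f t + lconv a g t := by
  unfold lconv
  rw [← intervalIntegral.integral_const_mul, ← intervalIntegral.integral_add
    ((conv_int ha hf ht).const_mul c) (conv_int ha hg ht)]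
  exact intervalIntegral.integral_congr fun x _ => by simp only []; ring

lemma lconv_one_deriv {a : ℝ → ℝ} (ha : CMinusOne a) {t : ℝ} (ht : 0 < t) :
    HasDerivAt (lconv (fun _ => 1) a) (a t) t := by
  have e : lconv (fun _ => 1) a = fun u => ∫ x in (0:ℝ)..u, a x := by
    funext u; simp [lconv]
  rw [e]
  refine intervalIntegral.integral_hasDerivAt_right (cm_int ha ht) ?_ ?_
  · exact (cm_continuousOn ha).stronglyMeasurableAtFilter isOpen_Ioi t ht
  · exact (cm_continuousOn ha).continuousAt (Ioi_mem_nhds ht)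

/-- Second fundamental theorem of FC for the 1st level GFD: for
`(κ, k₁, k₂) ∈ L₁¹` and `f ∈ C¹_{-1,(k₂)}(0,∞)` (i.e. `f ∈ C_{-1}(0,∞)`, `k₂ * f`
is differentiable on `(0,∞)` with finite limit `c = (k₂ * f)(0)` at `0+` and
`d/dt (k₂ * f) ∈ C_{-1}(0,∞)`), one has
`(κ * ( 1L D_{(k₁,k₂)} f))(t) = f(t) − (k₂ * f)(0) · (k₁ * κ)(t)` for all `t > 0`. -/
theorem second_fundamental_theorem_1L (κ k₁ k₂ f : ℝ → ℝ) (c : ℝ)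
    (hker : FirstLevelKernels κ k₁ k₂) (hf : CMinusOne f)
    (hdiff : ∀ t > (0:ℝ), DifferentiableAt ℝ (lconv k₂ f) t)
    (hlim : Tendsto (lconv k₂ f) (nhdsWithin 0 (Set.Ioi 0)) (nhds c))
    (hder : CMinusOne (deriv (lconv k₂ f))) :
    ∀ t > (0:ℝ),
      lconv κ (lconv k₁ (deriv (lconv k₂ f))) t = f t - c * lconv k₁ κ t := by
  intro t ht
  obtain ⟨hκ, hk₁, hk₂, hone⟩ := hker
  set g := deriv (lconv k₂ f) with hg
  have H : ∀ s > (0:ℝ), lconv k₂ f s = c * 1 + lconv (fun _ => 1) g s := by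
    intro s hs
    have := intervalIntegral.integral_eq_sub_of_hasDerivAt_of_tendsto hs
      (fun x hx => (hdiff x hx.1).hasDerivAt) (cm_int hder hs) hlim
      ((hdiff s hs).continuousAt.tendsto.mono_left nhdsWithin_le_nhds)
    have e : lconv (fun _ => 1) g s = ∫ y in (0:ℝ)..s, g y := by simp [lconv]
    rw [e, this]; ring
  have h12 := cm_lconv hk₁ hk₂
  have h1g := cm_lconv cm_one hder
  have hk1g := cm_lconv hk₁ hder
  have hA := cm_lconv hk₁ hκ
  have hB := cm_lconv hκ hk1g
  -- moving the constant kernel to the front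
  have swap : ∀ {a b : ℝ → ℝ}, CMinusOne a → CMinusOne b → ∀ s > (0:ℝ),
      lconv a (lconv (fun _ => 1) b) s = lconv (fun _ => 1) (lconv a b) s := by
    intro a b ha hb s hs
    rw [← lconv_assoc ha cm_one hb hs, ← lconv_assoc cm_one ha hb hs, lconv_comm _ b,
      lconv_comm _ b]
    exact lconv_congr b (fun u _ => lconv_comm _ _ u) hs
  have E : ∀ s > (0:ℝ), lconv (fun _ => 1) f s =
      c * lconv (fun _ => 1) (lconv k₁ κ) s
        + lconv (fun _ => 1) (lconv κ (lconv k₁ g)) s := by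
    intro s hs
    calc lconv (fun _ => 1) f s = lconv f (fun _ => 1) s := lconv_comm _ _ s
      _ = lconv f (lconv κ (lconv k₁ k₂)) s := lconv_congr f (fun u hu => (hone u hu).symm) hs
      _ = lconv (lconv κ (lconv k₁ k₂)) f s := lconv_comm _ _ s
      _ = lconv κ (lconv (lconv k₁ k₂) f) s := lconv_assoc hκ h12 hf hs
      _ = lconv κ (fun u => c * lconv k₁ (fun _ => 1) u
            + lconv (fun _ => 1) (lconv k₁ g) u) s := by
          refine lconv_congr κ (fun u hu => ?_) hs
          rw [lconv_assoc hk₁ hk₂ hf hu, lconv_congr k₁ H hu, lconv_lin c hk₁ cm_one h1g hu,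
            swap hk₁ hder u hu]
      _ = c * lconv κ (lconv k₁ (fun _ => 1)) s
            + lconv κ (lconv (fun _ => 1) (lconv k₁ g)) s :=
          lconv_lin c hκ (cm_lconv hk₁ cm_one) (cm_lconv cm_one hk1g) hs
      _ = _ := by
          rw [swap hκ hk1g s hs, lconv_congr κ (fun u _ => lconv_comm k₁ _ u) hs,
            swap hκ hk₁ s hs, lconv_congr _ (fun u _ => lconv_comm κ k₁ u) hs]
  have d1 := lconv_one_deriv hf ht
  have d2 := ((lconv_one_deriv hA ht).const_mul c).add (lconv_one_deriv hB ht)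
  have d3 := d2.congr_of_eventuallyEq (f₁ := lconv (fun _ => 1) f) (by
    filter_upwards [Ioi_mem_nhds ht] with s hs using E s hs)
  have := d1.unique d3
  linarith
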